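/- arXiv:1402.2092 — 12 statements merged into one kernel-verified Lean document; each statement's English description precedes it below -/
import Mathlib

section
/- In the crowd-teaching setting, the surrogate objective F : 2^X → ℝ defined by F(A) = Σ_{h∈H} (P0(h) − Q(h|A)) · err(h,h*) is nonnegative, monotone, and submodular. -/
open scoped Classical BigOperators

/-- In the crowd-teaching setting, the surrogate objective
`F(A) = Σ_h (P0(h) - Q(h|A)) · err(h,h*)` is nonnegative, monotone and submodular. -/
theorem stmt_2
    {X H : Type*} [Fintype X] [Nonempty X] [Fintype H]
    (hyp : H → X → ℝ) (hnz : ∀ h x, hyp h x ≠ 0)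
    (y : X → ℝ) (hy : ∀ x, y x = 1 ∨ y x = -1)
    (hstar : H) (hreal : ∀ x, Real.sign (hyp hstar x) = y x)
    (P0 : H → ℝ) (hP0pos : ∀ h, 0 < P0 h) (hP0sum : ∑ h, P0 h = 1)
    (α : ℝ) (hα : 0 < α)
    (Q : H → Finset X → ℝ)
    (hQ : ∀ h A, Q h A =
      P0 h * ∏ x ∈ A.filter (fun x => y x ≠ Real.sign (hyp h x)),
        (1 / (1 + Real.exp (-(α * hyp h x * y x)))))
    (err : H → ℝ)
    (herr : ∀ h, err h =
      ((Finset.univ.filter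
        (fun x => Real.sign (hyp h x) ≠ Real.sign (hyp hstar x))).card : ℝ)
        / (Fintype.card X : ℝ))
    (F : Finset X → ℝ)
    (hF : ∀ A, F A = ∑ h, (P0 h - Q h A) * err h) :
    (∀ A : Finset X, 0 ≤ F A) ∧
    (∀ A B : Finset X, A ⊆ B → F A ≤ F B) ∧
    (∀ (A B : Finset X) (x : X), A ⊆ B → x ∉ B →
      F (insert x B) - F B ≤ F (insert x A) - F A) := by
  obtain ⟨g, hg0, hg1, hQg⟩ : ∃ g : H → X → ℝ, (∀ h x, 0 ≤ g h x) ∧ (∀ h x, g h x ≤ 1) ∧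
      ∀ h A, Q h A = P0 h * ∏ x ∈ A, g h x := by
    refine ⟨fun h x => if y x ≠ Real.sign (hyp h x) then
      (1 / (1 + Real.exp (-(α * hyp h x * y x)))) else 1, ?_, ?_, ?_⟩
    · intro h x
      dsimp only
      split_ifs <;> positivity
    · intro h x
      dsimp only
      split_ifs
      · rw [div_le_one (by positivity)]
        linarith [Real.exp_pos (-(α * hyp h x * y x))]
      · exact le_rfl
    · intro h A
      rw [hQ, Finset.prod_filter]
  have he : ∀ h, 0 ≤ err h := fun h => by rw [herr]; positivity
  have hmono : ∀ h (A B : Finset X), A ⊆ B → Q h B ≤ Q h A := by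
    intro h A B hAB
    rw [hQg, hQg]
    refine mul_le_mul_of_nonneg_left ?_ (hP0pos h).le
    rw [← Finset.prod_sdiff hAB]
    exact mul_le_of_le_one_left (Finset.prod_nonneg fun x _ => hg0 h x)
      (Finset.prod_le_one (fun x _ => hg0 h x) (fun x _ => hg1 h x))
  refine ⟨?_, ?_, ?_⟩
  · intro A
    rw [hF]
    refine Finset.sum_nonneg fun h _ => mul_nonneg ?_ (he h)
    have h1 := hmono h ∅ A (Finset.empty_subset A)
    have h2 : Q h ∅ = P0 h := by rw [hQg]; simp
    linarith
  · intro A B hAB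
    rw [hF, hF]
    refine Finset.sum_le_sum fun h _ => mul_le_mul_of_nonneg_right ?_ (he h)
    linarith [hmono h A B hAB]
  · intro A B x hAB hxB
    have hxA : x ∉ A := fun hx => hxB (hAB hx)
    simp only [hF]
    rw [← Finset.sum_sub_distrib, ← Finset.sum_sub_distrib]
    refine Finset.sum_le_sum fun h _ => ?_
    rw [← sub_mul, ← sub_mul]
    refine mul_le_mul_of_nonneg_right ?_ (he h)
    have hB : Q h (insert x B) = g h x * Q h B := by
      rw [hQg, hQg, Finset.prod_insert hxB]; ring
    have hA : Q h (insert x A) = g h x * Q h A := by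
      rw [hQg, hQg, Finset.prod_insert hxA]; ring
    rw [hA, hB]
    nlinarith [mul_nonneg (sub_nonneg.2 (hmono h A B hAB)) (sub_nonneg.2 (hg1 h x))]
end

section
/- In the crowd-teaching setting, for every A ⊆ X the expected learner error is lower-bounded by the surrogate: E[err_L|A] ≥ E[err_L] − F(A), where E[err_L] = Σ_{h∈H} P0(h)·err(h,h*) is the expected error before teaching. In particular, if E[err_L] − F(A) > ε for some ε > 0, then E[err_L|A] > ε. -/
open scoped Classical BigOperators

/-- In the crowd-teaching setting, the expected learner error is lower-bounded by
the surrogate: `E[err_L|A] ≥ E[err_L] - F(A)`; in particular, if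
`E[err_L] - F(A) > ε` then `E[err_L|A] > ε`. -/
theorem stmt_4
    {X H : Type*} [Fintype X] [Nonempty X] [Fintype H]
    (hyp : H → X → ℝ) (hnz : ∀ h x, hyp h x ≠ 0)
    (y : X → ℝ) (hy : ∀ x, y x = 1 ∨ y x = -1)
    (hstar : H) (hreal : ∀ x, Real.sign (hyp hstar x) = y x)
    (P0 : H → ℝ) (hP0pos : ∀ h, 0 < P0 h) (hP0sum : ∑ h, P0 h = 1)
    (α : ℝ) (hα : 0 < α)
    (Q : H → Finset X → ℝ)
    (hQ : ∀ h A, Q h A =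
      P0 h * ∏ x ∈ A.filter (fun x => y x ≠ Real.sign (hyp h x)),
        (1 / (1 + Real.exp (-(α * hyp h x * y x)))))
    (Z : Finset X → ℝ) (hZ : ∀ A, Z A = ∑ h, Q h A)
    (P : H → Finset X → ℝ) (hP : ∀ h A, P h A = Q h A / Z A)
    (err : H → ℝ)
    (herr : ∀ h, err h =
      ((Finset.univ.filter
        (fun x => Real.sign (hyp h x) ≠ Real.sign (hyp hstar x))).card : ℝ)
        / (Fintype.card X : ℝ))
    (F : Finset X → ℝ)
    (hF : ∀ A, F A = ∑ h, (P0 h - Q h A) * err h)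
    (Err : Finset X → ℝ)
    (hErr : ∀ A, Err A = ∑ h, P h A * err h) :
    ∀ A : Finset X,
      ((∑ h, P0 h * err h) - F A ≤ Err A) ∧
      (∀ ε : ℝ, 0 < ε → (∑ h, P0 h * err h) - F A > ε → Err A > ε) := by
  intro A
  have hQpos : ∀ h, 0 < Q h A := by
    intro h
    rw [hQ]
    exact mul_pos (hP0pos h) (Finset.prod_pos fun x _ => by positivity)
  have hQle : ∀ h, Q h A ≤ P0 h := by
    intro h
    rw [hQ]
    refine mul_le_of_le_one_right (hP0pos h).le
      (Finset.prod_le_one (fun x _ => by positivity) fun x _ => ?_)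
    have := Real.exp_pos (-(α * hyp h x * y x))
    rw [div_le_one (by linarith)]
    linarith
  have hZpos : 0 < Z A := by
    rw [hZ]
    exact Finset.sum_pos (fun h _ => hQpos h) ⟨hstar, Finset.mem_univ _⟩
  have hZle : Z A ≤ 1 := by
    rw [hZ, ← hP0sum]
    exact Finset.sum_le_sum fun h _ => hQle h
  have main : (∑ h, P0 h * err h) - F A ≤ Err A := by
    rw [hF, hErr, ← Finset.sum_sub_distrib]
    refine Finset.sum_le_sum fun h _ => ?_
    have e : P0 h * err h - (P0 h - Q h A) * err h = Q h A * err h := by ring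
    rw [e, hP]
    have h0 : 0 ≤ err h := by
      rw [herr]
      positivity
    refine mul_le_mul_of_nonneg_right ?_ h0
    rw [le_div_iff₀ hZpos]
    exact mul_le_of_le_one_right (hQpos h).le hZle
  exact ⟨main, fun ε _ h => lt_of_lt_of_le h main⟩
end

section
/- In the crowd-teaching setting, for every A ⊆ X the expected learner error satisfies the upper bound E[err_L|A] ≤ (1/P0(h*)) · (E − F(A)), where E = Σ_{h∈H} P0(h)·err(h,h*). -/
open scoped Classical BigOperators

/-- In the crowd-teaching setting, the expected learner error is upper bounded by
`(1/P0(h*)) · (E - F(A))`, where `E = Σ_h P0(h)·err(h,h*)`. -/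
theorem stmt_5
    {X H : Type*} [Fintype X] [Nonempty X] [Fintype H]
    (hyp : H → X → ℝ) (hnz : ∀ h x, hyp h x ≠ 0)
    (y : X → ℝ) (hy : ∀ x, y x = 1 ∨ y x = -1)
    (hstar : H) (hreal : ∀ x, Real.sign (hyp hstar x) = y x)
    (P0 : H → ℝ) (hP0pos : ∀ h, 0 < P0 h) (hP0sum : ∑ h, P0 h = 1)
    (α : ℝ) (hα : 0 < α)
    (Q : H → Finset X → ℝ)
    (hQ : ∀ h A, Q h A =
      P0 h * ∏ x ∈ A.filter (fun x => y x ≠ Real.sign (hyp h x)),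
        (1 / (1 + Real.exp (-(α * hyp h x * y x)))))
    (Z : Finset X → ℝ) (hZ : ∀ A, Z A = ∑ h, Q h A)
    (P : H → Finset X → ℝ) (hP : ∀ h A, P h A = Q h A / Z A)
    (err : H → ℝ)
    (herr : ∀ h, err h =
      ((Finset.univ.filter
        (fun x => Real.sign (hyp h x) ≠ Real.sign (hyp hstar x))).card : ℝ)
        / (Fintype.card X : ℝ))
    (F : Finset X → ℝ)
    (hF : ∀ A, F A = ∑ h, (P0 h - Q h A) * err h)
    (Err : Finset X → ℝ)
    (hErr : ∀ A, Err A = ∑ h, P h A * err h) :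
    ∀ A : Finset X,
      Err A ≤ (1 / P0 hstar) * ((∑ h, P0 h * err h) - F A) := by
  intro A
  have hQpos : ∀ h, 0 < Q h A := by
    intro h
    rw [hQ]
    exact mul_pos (hP0pos h) (Finset.prod_pos fun x _ => by positivity)
  have herr0 : ∀ h, 0 ≤ err h := by
    intro h
    rw [herr]
    positivity
  have hQs : Q hstar A = P0 hstar := by
    rw [hQ, Finset.prod_eq_one, mul_one]
    intro x hx
    exact absurd (hreal x).symm (Finset.mem_filter.mp hx).2
  have hZge : P0 hstar ≤ Z A := by
    rw [hZ, ← hQs]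
    exact Finset.single_le_sum (f := fun h => Q h A) (fun h _ => (hQpos h).le)
      (Finset.mem_univ hstar)
  have hE : (∑ h, P0 h * err h) - F A = ∑ h, Q h A * err h := by
    rw [hF, ← Finset.sum_sub_distrib]
    exact Finset.sum_congr rfl fun h _ => by ring
  rw [hE, hErr, Finset.mul_sum]
  refine Finset.sum_le_sum fun h _ => ?_
  have h1 : 1 / Z A ≤ 1 / P0 hstar := one_div_le_one_div_of_le (hP0pos hstar) hZge
  have h2 : P h A * err h = 1 / Z A * (Q h A * err h) := by
    rw [hP]; ring
  rw [h2]
  exact mul_le_mul_of_nonneg_right h1 (mul_nonneg (hQpos h).le (herr0 h))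
end

section
/- In the crowd-teaching setting, fix ε > 0. If a set A ⊆ X satisfies the STRICT stopping condition F(A) ≥ E − P0(h*)·ε, where E = Σ_{h∈H} P0(h)·err(h,h*), then the expected learner error satisfies E[err_L|A] ≤ ε. -/
open scoped Classical BigOperators

/-- In the crowd-teaching setting, if a set `A` satisfies the STRICT stopping
condition `F(A) ≥ E - P0(h*)·ε`, then the expected learner error satisfies
`E[err_L|A] ≤ ε`. -/
theorem stmt_6
    {X H : Type*} [Fintype X] [Nonempty X] [Fintype H]
    (hyp : H → X → ℝ) (hnz : ∀ h x, hyp h x ≠ 0)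
    (y : X → ℝ) (hy : ∀ x, y x = 1 ∨ y x = -1)
    (hstar : H) (hreal : ∀ x, Real.sign (hyp hstar x) = y x)
    (P0 : H → ℝ) (hP0pos : ∀ h, 0 < P0 h) (hP0sum : ∑ h, P0 h = 1)
    (α : ℝ) (hα : 0 < α)
    (Q : H → Finset X → ℝ)
    (hQ : ∀ h A, Q h A =
      P0 h * ∏ x ∈ A.filter (fun x => y x ≠ Real.sign (hyp h x)),
        (1 / (1 + Real.exp (-(α * hyp h x * y x)))))
    (Z : Finset X → ℝ) (hZ : ∀ A, Z A = ∑ h, Q h A)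
    (P : H → Finset X → ℝ) (hP : ∀ h A, P h A = Q h A / Z A)
    (err : H → ℝ)
    (herr : ∀ h, err h =
      ((Finset.univ.filter
        (fun x => Real.sign (hyp h x) ≠ Real.sign (hyp hstar x))).card : ℝ)
        / (Fintype.card X : ℝ))
    (F : Finset X → ℝ)
    (hF : ∀ A, F A = ∑ h, (P0 h - Q h A) * err h)
    (Err : Finset X → ℝ)
    (hErr : ∀ A, Err A = ∑ h, P h A * err h)
    (ε : ℝ) (hε : 0 < ε) :
    ∀ A : Finset X,
      F A ≥ (∑ h, P0 h * err h) - P0 hstar * ε → Err A ≤ ε := by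
  intro A hA
  have hQnn : ∀ h, 0 ≤ Q h A := by
    intro h
    rw [hQ]
    exact mul_nonneg (hP0pos h).le (Finset.prod_nonneg fun x _ => by positivity)
  have hQs : Q hstar A = P0 hstar := by
    rw [hQ, Finset.filter_false_of_mem (fun x _ => by simp [hreal x])]
    simp
  have hZge : P0 hstar ≤ Z A := by
    rw [hZ, ← hQs]
    exact Finset.single_le_sum (f := fun h => Q h A) (fun h _ => hQnn h) (Finset.mem_univ hstar)
  have hZpos : 0 < Z A := lt_of_lt_of_le (hP0pos hstar) hZge
  have hF2 : F A = (∑ h, P0 h * err h) - ∑ h, Q h A * err h := by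
    rw [hF, ← Finset.sum_sub_distrib]
    exact Finset.sum_congr rfl fun h _ => by ring
  have hE : Err A = (∑ h, Q h A * err h) / Z A := by
    rw [hErr, Finset.sum_div]
    exact Finset.sum_congr rfl fun h _ => by rw [hP]; ring
  rw [hE, div_le_iff₀ hZpos]
  have h1 := mul_le_mul_of_nonneg_right hZge hε.le
  linarith
end

section
/- Let f be a nonnegative, monotone, submodular set function on a finite ground set X, and let S_0 = ∅, S_{t+1} = S_t ∪ {x_t} where x_t ∈ argmax_{x∈X} f(S_t ∪ {x}) is a greedily chosen element. Then for all nonnegative integers k ≥ 1 and ℓ: f(S_ℓ) ≥ (1 − e^{−ℓ/k}) · max_{S⊆X, |S|=k} f(S). -/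
open scoped Classical BigOperators

/-- Greedy maximization of a nonnegative monotone submodular function:
`f(S_ℓ) ≥ (1 - e^{-ℓ/k}) · max_{|S| = k} f(S)`. -/
theorem stmt_7
    {X : Type*} [Fintype X] [DecidableEq X]
    (f : Finset X → ℝ)
    (hnonneg : ∀ A : Finset X, 0 ≤ f A)
    (hmono : ∀ A B : Finset X, A ⊆ B → f A ≤ f B)
    (hsub : ∀ (A B : Finset X) (x : X), A ⊆ B → x ∉ B →
      f (insert x B) - f B ≤ f (insert x A) - f A)
    (S : ℕ → Finset X) (hS0 : S 0 = ∅)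
    (hSgreedy : ∀ t : ℕ, ∃ xt : X, S (t + 1) = insert xt (S t) ∧
      ∀ x : X, f (insert x (S t)) ≤ f (insert xt (S t))) :
    ∀ (k ℓ : ℕ), 1 ≤ k → ∀ T : Finset X, T.card = k →
      (1 - Real.exp (-(ℓ : ℝ) / (k : ℝ))) * f T ≤ f (S ℓ) := by
  intro k ℓ hk T hT
  have hk' : (1 : ℝ) ≤ k := by exact_mod_cast hk
  have hk0 : (0 : ℝ) < k := by linarith
  have key : ∀ (t : ℕ) (U : Finset X),
      f (S t ∪ U) ≤ f (S t) + (U.card : ℝ) * (f (S (t + 1)) - f (S t)) := by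
    intro t U
    obtain ⟨xt, h1, h2⟩ := hSgreedy t
    have hd : 0 ≤ f (S (t + 1)) - f (S t) := by
      rw [h1]
      linarith [hmono (S t) (insert xt (S t)) (Finset.subset_insert _ _)]
    induction U using Finset.induction_on with
    | empty => simp
    | insert a U ha ih =>
      rw [Finset.card_insert_of_notMem ha, Finset.union_insert]
      push_cast
      by_cases hm : a ∈ S t ∪ U
      · rw [Finset.insert_eq_of_mem hm]
        linarith
      · have h3 := hsub (S t) (S t ∪ U) a Finset.subset_union_left hm
        have h4 := h2 a
        rw [← h1] at h4
        linarith
  have main : ∀ n : ℕ, f T - f (S n) ≤ Real.exp (-(n : ℝ) / (k : ℝ)) * f T := by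
    intro n
    induction n with
    | zero => simp [hnonneg]
    | succ n ih =>
      have h1 := key n T
      have h2 := hmono T (S n ∪ T) Finset.subset_union_right
      rw [hT] at h1
      have h3 : f T - f (S (n + 1)) ≤ (1 - 1 / (k : ℝ)) * (f T - f (S n)) := by
        have h5 : (f T - f (S n)) / k ≤ f (S (n + 1)) - f (S n) := by
          rw [div_le_iff₀ hk0]
          linarith
        have h6 : (1 - 1 / (k : ℝ)) * (f T - f (S n))
            = (f T - f (S n)) - (f T - f (S n)) / k := by ring
        linarith
      have h7 : (0 : ℝ) ≤ 1 - 1 / (k : ℝ) := by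
        rw [sub_nonneg, div_le_one hk0]
        exact hk'
      have h8 : 1 - 1 / (k : ℝ) ≤ Real.exp (-(1 / (k : ℝ))) := by
        linarith [Real.add_one_le_exp (-(1 / (k : ℝ)))]
      have h9 : Real.exp (-((n + 1 : ℕ) : ℝ) / (k : ℝ))
          = Real.exp (-(1 / (k : ℝ))) * Real.exp (-(n : ℝ) / (k : ℝ)) := by
        rw [← Real.exp_add]
        congr 1
        push_cast
        ring
      rw [h9, mul_assoc]
      refine h3.trans ((mul_le_mul_of_nonneg_left ih h7).trans ?_)
      exact mul_le_mul_of_nonneg_right h8 (mul_nonneg (Real.exp_pos _).le (hnonneg T))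
  linarith [main ℓ]
end

section
/- In the crowd-teaching setting, suppose E > 0, 0 < P0(h*)·ε < 2E, and suppose there exists a set of cardinality k with F-value at least E − P0(h*)·ε/2, where E = Σ_{h∈H} P0(h)·err(h,h*). Let A_ℓ be the set produced by ℓ iterations of greedy maximization of F starting from the empty set. Then for every integer ℓ ≥ k · ln(2E/(P0(h*)·ε)) one has F(A_ℓ) ≥ E − P0(h*)·ε. -/
open scoped Classical BigOperators

lemma aux_insert {X : Type*} (w : X → ℝ) (h0 : ∀ x, 0 ≤ w x) (h1 : ∀ x, w x ≤ 1)
    (A : Finset X) (x : X) : ∏ z ∈ insert x A, w z ≤ ∏ z ∈ A, w z := by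
  by_cases hx : x ∈ A
  · rw [Finset.insert_eq_of_mem hx]
  · rw [Finset.prod_insert hx]
    exact mul_le_of_le_one_left (Finset.prod_nonneg fun z _ => h0 z) (h1 x)

lemma aux_union {X : Type*} (w : X → ℝ) (h0 : ∀ x, 0 ≤ w x) (h1 : ∀ x, w x ≤ 1)
    (A B : Finset X) : ∏ z ∈ A ∪ B, w z ≤ ∏ z ∈ A, w z := by
  induction B using Finset.induction_on with
  | empty => simp
  | insert b B hb ih =>
    rw [Finset.union_insert]
    exact (aux_insert w h0 h1 _ b).trans ih

lemma aux_sub {X : Type*} (w : X → ℝ) (h0 : ∀ x, 0 ≤ w x) (h1 : ∀ x, w x ≤ 1)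
    (A B : Finset X) : ∏ z ∈ A, w z - ∏ z ∈ A ∪ B, w z
      ≤ ∑ x ∈ B, (∏ z ∈ A, w z - ∏ z ∈ insert x A, w z) := by
  induction B using Finset.induction_on with
  | empty => simp
  | insert b B hb ih =>
    rw [Finset.sum_insert hb, Finset.union_insert]
    have key : ∏ z ∈ A ∪ B, w z - ∏ z ∈ insert b (A ∪ B), w z
        ≤ ∏ z ∈ A, w z - ∏ z ∈ insert b A, w z := by
      by_cases hm : b ∈ A ∪ B
      · rw [Finset.insert_eq_of_mem hm, sub_self]
        exact sub_nonneg.2 (aux_insert w h0 h1 A b)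
      · have hA : b ∉ A := fun h => hm (Finset.mem_union_left _ h)
        rw [Finset.prod_insert hm, Finset.prod_insert hA]
        nlinarith [aux_union w h0 h1 A B, h1 b]
    linarith

/-- In the crowd-teaching setting: if some set of cardinality `k` has `F`-value at
least `E - P0(h*)·ε/2`, then greedy maximization of `F` reaches `F`-value at least
`E - P0(h*)·ε` after `ℓ ≥ k · ln(2E/(P0(h*)·ε))` iterations. -/
theorem stmt_8
    {X H : Type*} [Fintype X] [Nonempty X] [Fintype H]
    (hyp : H → X → ℝ) (hnz : ∀ h x, hyp h x ≠ 0)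
    (y : X → ℝ) (hy : ∀ x, y x = 1 ∨ y x = -1)
    (hstar : H) (hreal : ∀ x, Real.sign (hyp hstar x) = y x)
    (P0 : H → ℝ) (hP0pos : ∀ h, 0 < P0 h) (hP0sum : ∑ h, P0 h = 1)
    (α : ℝ) (hα : 0 < α)
    (Q : H → Finset X → ℝ)
    (hQ : ∀ h A, Q h A =
      P0 h * ∏ x ∈ A.filter (fun x => y x ≠ Real.sign (hyp h x)),
        (1 / (1 + Real.exp (-(α * hyp h x * y x)))))
    (err : H → ℝ)
    (herr : ∀ h, err h =
      ((Finset.univ.filter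
        (fun x => Real.sign (hyp h x) ≠ Real.sign (hyp hstar x))).card : ℝ)
        / (Fintype.card X : ℝ))
    (F : Finset X → ℝ)
    (hF : ∀ A, F A = ∑ h, (P0 h - Q h A) * err h)
    (Etot : ℝ) (hEtot : Etot = ∑ h, P0 h * err h) (hEpos : 0 < Etot)
    (ε : ℝ) (hε0 : 0 < P0 hstar * ε) (hε2 : P0 hstar * ε < 2 * Etot)
    (k : ℕ) (hk : ∃ B : Finset X, B.card = k ∧ F B ≥ Etot - P0 hstar * ε / 2)
    (A : ℕ → Finset X) (hA0 : A 0 = ∅)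
    (hAgreedy : ∀ t : ℕ, ∃ xt : X, A (t + 1) = insert xt (A t) ∧
      ∀ x : X, F (insert x (A t)) ≤ F (insert xt (A t))) :
    ∀ ℓ : ℕ, (ℓ : ℝ) ≥ (k : ℝ) * Real.log (2 * Etot / (P0 hstar * ε)) →
      F (A ℓ) ≥ Etot - P0 hstar * ε := by
  obtain ⟨B, hBk, hB⟩ := hk
  set w : H → X → ℝ := fun h x => if y x ≠ Real.sign (hyp h x) then
    (1 / (1 + Real.exp (-(α * hyp h x * y x)))) else 1 with hw
  have w0 : ∀ h x, 0 ≤ w h x := by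
    intro h x
    simp only [hw]
    split_ifs <;> positivity
  have w1 : ∀ h x, w h x ≤ 1 := by
    intro h x
    simp only [hw]
    split_ifs
    · rw [div_le_one (by positivity)]
      linarith [Real.exp_pos (-(α * hyp h x * y x))]
    · exact le_rfl
  have hQ' : ∀ h A, Q h A = P0 h * ∏ x ∈ A, w h x := by
    intro h A
    rw [hQ, Finset.prod_filter]
  have c0 : ∀ h, 0 ≤ P0 h * err h := by
    intro h
    rw [herr]
    have := hP0pos h
    positivity
  have hF' : ∀ A, F A = Etot - ∑ h, P0 h * err h * ∏ x ∈ A, w h x := by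
    intro A
    rw [hF, hEtot, ← Finset.sum_sub_distrib]
    refine Finset.sum_congr rfl fun h _ => ?_
    rw [hQ']; ring
  have hFE : ∀ A, F A ≤ Etot := by
    intro A
    rw [hF']
    have : 0 ≤ ∑ h, P0 h * err h * ∏ x ∈ A, w h x :=
      Finset.sum_nonneg fun h _ => mul_nonneg (c0 h) (Finset.prod_nonneg fun z _ => w0 h z)
    linarith
  have hF0 : F ∅ = 0 := by
    rw [hF']; simp [hEtot]
  have hmono : ∀ A, F B ≤ F (A ∪ B) := by
    intro A
    rw [hF', hF']
    refine sub_le_sub_left (Finset.sum_le_sum fun h _ => ?_) _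
    rw [Finset.union_comm]
    exact mul_le_mul_of_nonneg_left (aux_union (w h) (w0 h) (w1 h) B A) (c0 h)
  have hsub : ∀ A, F (A ∪ B) - F A ≤ ∑ x ∈ B, (F (insert x A) - F A) := by
    intro A
    have e : ∀ C, F C - F A =
        ∑ h, P0 h * err h * (∏ x ∈ A, w h x - ∏ x ∈ C, w h x) := by
      intro C
      rw [hF', hF']
      simp only [mul_sub, Finset.sum_sub_distrib]
      ring
    simp only [e]
    rw [Finset.sum_comm]
    refine Finset.sum_le_sum fun h _ => ?_
    rw [← Finset.mul_sum]
    exact mul_le_mul_of_nonneg_left (aux_sub (w h) (w0 h) (w1 h) A B) (c0 h)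
  have hkpos : 0 < k := by
    rcases Nat.eq_zero_or_pos k with h | h
    · rw [h, Finset.card_eq_zero] at hBk
      rw [hBk, hF0] at hB
      linarith
    · exact h
  have hkR : (1 : ℝ) ≤ k := by exact_mod_cast hkpos
  have hk0 : (0 : ℝ) < k := by linarith
  have hstep : ∀ t, F B - F (A (t + 1)) ≤ (1 - 1 / (k : ℝ)) * (F B - F (A t)) := by
    intro t
    obtain ⟨xt, h1, h2⟩ := hAgreedy t
    have h3 : ∑ x ∈ B, (F (insert x (A t)) - F (A t)) ≤ k * (F (A (t + 1)) - F (A t)) := by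
      have := Finset.sum_le_card_nsmul B (fun x => F (insert x (A t)) - F (A t))
        (F (A (t + 1)) - F (A t)) (fun x _ => by rw [h1]; linarith [h2 x])
      rwa [hBk, nsmul_eq_mul] at this
    have h4 : F B - F (A t) ≤ k * (F (A (t + 1)) - F (A t)) := by
      linarith [hsub (A t), hmono (A t)]
    have h5 : (F B - F (A t)) / k ≤ F (A (t + 1)) - F (A t) := by
      rw [div_le_iff₀ hk0]; linarith
    have h6 : (1 - 1 / (k : ℝ)) * (F B - F (A t)) = F B - F (A t) - (F B - F (A t)) / k := by
      ring
    linarith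
  have hr0 : 0 ≤ 1 - 1 / (k : ℝ) := by
    rw [sub_nonneg, div_le_one hk0]; exact hkR
  have hiter : ∀ t, F B - F (A t) ≤ (1 - 1 / (k : ℝ)) ^ t * Etot := by
    intro t
    induction t with
    | zero => rw [hA0, hF0]; simpa using hFE B
    | succ t ih =>
      calc _ ≤ _ := hstep t
        _ ≤ _ := mul_le_mul_of_nonneg_left ih hr0
        _ = _ := by ring
  intro l hl
  have hexp : (1 - 1 / (k : ℝ)) ^ l ≤ P0 hstar * ε / (2 * Etot) := by
    calc (1 - 1 / (k : ℝ)) ^ l ≤ (Real.exp (-(1 / (k : ℝ)))) ^ l := by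
          refine pow_le_pow_left₀ hr0 ?_ l
          linarith [Real.add_one_le_exp (-(1 / (k : ℝ)))]
      _ = Real.exp (-((l : ℝ) / k)) := by
          rw [← Real.exp_nat_mul]; congr 1; ring
      _ ≤ Real.exp (-Real.log (2 * Etot / (P0 hstar * ε))) := by
          refine Real.exp_le_exp.2 (neg_le_neg ?_)
          rw [le_div_iff₀ hk0]; linarith
      _ = _ := by
          rw [Real.exp_neg, Real.exp_log (by positivity), inv_div]
  have h7 : (1 - 1 / (k : ℝ)) ^ l * Etot ≤ P0 hstar * ε / 2 := by
    calc _ ≤ P0 hstar * ε / (2 * Etot) * Etot := mul_le_mul_of_nonneg_right hexp hEpos.le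
      _ = _ := by field_simp
  linarith [hiter l]
end

section
/- In the teacher-update setting, for any sequence of examples and any 0 ≤ w_o < 1, the error ratios η_t are nonnegative and nonincreasing: for all s ≥ t ≥ 0, 0 ≤ η_s ≤ η_t ≤ η_0 = (1 − P0(h*)) / P0(h*). -/
open scoped Classical BigOperators

/-- The teacher's error ratios `η_t = (1 - p_t(h*))/p_t(h*)` are nonnegative and
nonincreasing, starting from `η_0 = (1 - P0(h*))/P0(h*)`. -/
theorem stmt_11
    {X H : Type*} [Fintype H]
    (hyp : H → X → ℝ) (hnz : ∀ h x, hyp h x ≠ 0)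
    (hstar : H)
    (P0 : H → ℝ) (hP0pos : ∀ h, 0 < P0 h) (hP0sum : ∑ h, P0 h = 1)
    (w_o : ℝ) (hw0 : 0 ≤ w_o) (hw1 : w_o < 1)
    (ex : ℕ → X)
    (ξ : ℕ → H → ℝ)
    (hξ : ∀ t h, ξ t h = Real.sign (hyp h (ex t)) * Real.sign (hyp hstar (ex t)))
    (p : ℕ → H → ℝ) (hp0 : ∀ h, p 0 h = P0 h)
    (hprec : ∀ (t : ℕ) (h : H),
      p (t + 1) h = p t h * w_o ^ ((1 - ξ (t + 1) h) / 2)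
        / ∑ h', p t h' * w_o ^ ((1 - ξ (t + 1) h') / 2))
    (η : ℕ → ℝ)
    (hη : ∀ t : ℕ, η t = (1 - p t hstar) / p t hstar) :
    η 0 = (1 - P0 hstar) / P0 hstar ∧
    ∀ t s : ℕ, t ≤ s → 0 ≤ η s ∧ η s ≤ η t := by
  have hs : ∀ t, ξ t hstar = 1 := by
    intro t
    rw [hξ]
    rcases Real.sign_apply_eq_of_ne_zero _ (hnz hstar (ex t)) with h | h <;> rw [h] <;> norm_num
  have hle : ∀ t h, ξ t h ≤ 1 := by
    intro t h
    rw [hξ]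
    rcases Real.sign_apply_eq_of_ne_zero _ (hnz hstar (ex t)) with h1 | h1 <;>
    rcases Real.sign_apply_eq_of_ne_zero _ (hnz h (ex t)) with h2 | h2 <;>
    rw [h1, h2] <;> norm_num
  have hW0 : ∀ t h, 0 ≤ w_o ^ ((1 - ξ t h) / 2) := fun t h => Real.rpow_nonneg hw0 _
  have hW1 : ∀ t h, w_o ^ ((1 - ξ t h) / 2) ≤ 1 := fun t h =>
    Real.rpow_le_one hw0 hw1.le (by linarith [hle t h])
  have hWs : ∀ t, w_o ^ ((1 - ξ t hstar) / 2) = 1 := by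
    intro t
    rw [hs]
    norm_num
  have hZ : ∀ t, (∀ h, 0 ≤ p t h) → 0 < p t hstar →
      0 < ∑ h', p t h' * w_o ^ ((1 - ξ (t + 1) h') / 2) := by
    intro t h0 hpos
    have := Finset.single_le_sum (f := fun h' => p t h' * w_o ^ ((1 - ξ (t + 1) h') / 2))
      (fun i _ => mul_nonneg (h0 i) (hW0 _ i)) (Finset.mem_univ hstar)
    simp only [hWs, mul_one] at this
    linarith
  have inv : ∀ t, (∀ h, 0 ≤ p t h) ∧ 0 < p t hstar ∧ ∑ h, p t h = 1 := by
    intro t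
    induction t with
    | zero =>
      refine ⟨fun h => ?_, ?_, ?_⟩
      · rw [hp0]; exact (hP0pos h).le
      · rw [hp0]; exact hP0pos _
      · simp only [hp0, hP0sum]
    | succ t ih =>
      obtain ⟨h0, hpos, hsum⟩ := ih
      have hz := hZ t h0 hpos
      refine ⟨fun h => ?_, ?_, ?_⟩
      · rw [hprec]; exact div_nonneg (mul_nonneg (h0 h) (hW0 _ h)) hz.le
      · rw [hprec, hWs, mul_one]; exact div_pos hpos hz
      · simp only [hprec t]
        rw [← Finset.sum_div]
        exact div_self hz.ne'
  have hp1 : ∀ t, p t hstar ≤ 1 := by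
    intro t
    obtain ⟨h0, hpos, hsum⟩ := inv t
    rw [← hsum]
    exact Finset.single_le_sum (fun i _ => h0 i) (Finset.mem_univ hstar)
  have hmono : Monotone (fun t => p t hstar) := by
    refine monotone_nat_of_le_succ fun t => ?_
    obtain ⟨h0, hpos, hsum⟩ := inv t
    have hz := hZ t h0 hpos
    have hz1 : ∑ h', p t h' * w_o ^ ((1 - ξ (t + 1) h') / 2) ≤ 1 := by
      refine le_trans ?_ hsum.le
      exact Finset.sum_le_sum fun i _ => mul_le_of_le_one_right (h0 i) (hW1 _ i)
    show p t hstar ≤ p (t + 1) hstar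
    rw [hprec, hWs, mul_one, le_div_iff₀ hz]
    exact mul_le_of_le_one_right hpos.le hz1
  refine ⟨by rw [hη, hp0], fun t s hts => ⟨?_, ?_⟩⟩
  · rw [hη]
    exact div_nonneg (by linarith [hp1 s]) (inv s).2.1.le
  · have hm : p t hstar ≤ p s hstar := hmono hts
    rw [hη, hη]
    exact div_le_div₀ (by linarith [hp1 t]) (by linarith) (inv t).2.1 hm
end

section
/- In the teacher-update setting, let (ω_t)_{t≥1} be any sequence of learner weights with 0 ≤ ω_t ≤ w_o for all t, and define the learner posterior by q_0 = P0 and q_t(h) = q_{t−1}(h)·ω_t^{(1−ξ_t(h))/2} / (Σ_{h'∈H} q_{t−1}(h')·ω_t^{(1−ξ_t(h'))/2}). Then for every t ≥ 0 the learner's error ratio is dominated by the teacher's: (1 − q_t(h*)) / q_t(h*) ≤ (1 − p_t(h*)) / p_t(h*) = η_t. -/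
open scoped Classical BigOperators

/-- Domination: if the learner updates with weights `ω_t ≤ w_o`, then the learner's
error ratio is dominated by the teacher's: `(1 - q_t(h*))/q_t(h*) ≤ η_t`. -/
theorem stmt_12
    {X H : Type*} [Fintype H]
    (hyp : H → X → ℝ) (hnz : ∀ h x, hyp h x ≠ 0)
    (hstar : H)
    (P0 : H → ℝ) (hP0pos : ∀ h, 0 < P0 h) (hP0sum : ∑ h, P0 h = 1)
    (w_o : ℝ) (hw0 : 0 ≤ w_o) (hw1 : w_o < 1)
    (ex : ℕ → X)
    (ξ : ℕ → H → ℝ)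
    (hξ : ∀ t h, ξ t h = Real.sign (hyp h (ex t)) * Real.sign (hyp hstar (ex t)))
    (p : ℕ → H → ℝ) (hp0 : ∀ h, p 0 h = P0 h)
    (hprec : ∀ (t : ℕ) (h : H),
      p (t + 1) h = p t h * w_o ^ ((1 - ξ (t + 1) h) / 2)
        / ∑ h', p t h' * w_o ^ ((1 - ξ (t + 1) h') / 2))
    (η : ℕ → ℝ)
    (hη : ∀ t : ℕ, η t = (1 - p t hstar) / p t hstar)
    (ω : ℕ → ℝ) (hω : ∀ t, 0 ≤ ω t ∧ ω t ≤ w_o)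
    (q : ℕ → H → ℝ) (hq0 : ∀ h, q 0 h = P0 h)
    (hqrec : ∀ (t : ℕ) (h : H),
      q (t + 1) h = q t h * ω (t + 1) ^ ((1 - ξ (t + 1) h) / 2)
        / ∑ h', q t h' * ω (t + 1) ^ ((1 - ξ (t + 1) h') / 2)) :
    ∀ t : ℕ, (1 - q t hstar) / q t hstar ≤ η t := by
  have hs : ∀ t, ξ t hstar = 1 := by
    intro t
    rw [hξ]
    rcases Real.sign_apply_eq_of_ne_zero _ (hnz hstar (ex t)) with h | h <;> rw [h] <;> norm_num
  have hξle : ∀ t h, ξ t h ≤ 1 := by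
    intro t h
    rw [hξ]
    rcases Real.sign_apply_eq_of_ne_zero _ (hnz hstar (ex t)) with h1 | h1 <;>
    rcases Real.sign_apply_eq_of_ne_zero _ (hnz h (ex t)) with h2 | h2 <;>
      rw [h1, h2] <;> norm_num
  have step : ∀ (w : ℝ) (f : H → ℝ) (t : ℕ), 0 ≤ w → (∀ h, 0 ≤ f h) → 0 < f hstar →
      0 < ∑ h', f h' * w ^ ((1 - ξ t h') / 2) := by
    intro w f t hw hf hfs
    apply Finset.sum_pos'
    · intro h _
      exact mul_nonneg (hf h) (Real.rpow_nonneg hw _)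
    · exact ⟨hstar, Finset.mem_univ _, by simpa [hs] using hfs⟩
  have key : ∀ t, (∀ h, 0 ≤ p t h) ∧ (∀ h, 0 ≤ q t h) ∧ 0 < p t hstar ∧ 0 < q t hstar ∧
      ∑ h, p t h = 1 ∧ ∑ h, q t h = 1 ∧ ∀ h, q t h * p t hstar ≤ p t h * q t hstar := by
    intro t
    induction t with
    | zero =>
      simp only [hp0, hq0]
      exact ⟨fun h => (hP0pos h).le, fun h => (hP0pos h).le, hP0pos _, hP0pos _, hP0sum, hP0sum,
        fun h => le_rfl⟩
    | succ t ih =>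
      obtain ⟨hp, hq, hps, hqs, -, -, hd⟩ := ih
      have hω0 := (hω (t + 1)).1
      have hωw := (hω (t + 1)).2
      have hZp := step w_o (p t) (t + 1) hw0 hp hps
      have hZq := step (ω (t + 1)) (q t) (t + 1) hω0 hq hqs
      have ep := hprec t
      have eq := hqrec t
      generalize hZpe : ∑ h', p t h' * w_o ^ ((1 - ξ (t + 1) h') / 2) = Zp at *
      generalize hZqe : ∑ h', q t h' * ω (t + 1) ^ ((1 - ξ (t + 1) h') / 2) = Zq at *
      have eps : p (t + 1) hstar = p t hstar / Zp := by rw [ep, hs]; simp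
      have eqs : q (t + 1) hstar = q t hstar / Zq := by rw [eq, hs]; simp
      refine ⟨fun h => ?_, fun h => ?_, ?_, ?_, ?_, ?_, fun h => ?_⟩
      · rw [ep]
        exact div_nonneg (mul_nonneg (hp h) (Real.rpow_nonneg hw0 _)) hZp.le
      · rw [eq]
        exact div_nonneg (mul_nonneg (hq h) (Real.rpow_nonneg hω0 _)) hZq.le
      · rw [eps]; exact div_pos hps hZp
      · rw [eqs]; exact div_pos hqs hZq
      · simp only [ep]
        rw [← Finset.sum_div, hZpe, div_self hZp.ne']
      · simp only [eq]
        rw [← Finset.sum_div, hZqe, div_self hZq.ne']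
      · rw [eps, eqs, ep, eq, div_mul_div_comm, div_mul_div_comm, mul_comm Zp Zq]
        apply div_le_div_of_nonneg_right _ (mul_pos hZq hZp).le
        have hab : ω (t + 1) ^ ((1 - ξ (t + 1) h) / 2) ≤ w_o ^ ((1 - ξ (t + 1) h) / 2) :=
          Real.rpow_le_rpow hω0 hωw (by linarith [hξle (t + 1) h])
        have := mul_le_mul (hd h) hab (Real.rpow_nonneg hω0 _) (mul_nonneg (hp h) hqs.le)
        linarith
  intro t
  obtain ⟨hp, hq, hps, hqs, sp, sq, hd⟩ := key t
  have h1 : p t hstar ≤ q t hstar := by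
    have := Finset.sum_le_sum (fun h (_ : h ∈ Finset.univ) => hd h)
    rwa [← Finset.sum_mul, ← Finset.sum_mul, sp, sq, one_mul, one_mul] at this
  rw [hη, div_le_div_iff₀ hqs hps]
  linarith
end

section
/- (Ham-sandwich lemma for hyperplane arrangements.) Let h_1, …, h_n : ℝ^d → ℝ be non-constant affine functions whose zero sets (hyperplanes) are pairwise distinct. Call a sign vector σ ∈ {−1,+1}^n realized if there exists x ∈ ℝ^d with σ_i · h_i(x) > 0 for all i, and call two realized sign vectors neighboring if they differ in exactly one coordinate. Then for every probability vector p ∈ ℝ^n (p_i ≥ 0, Σ_i p_i = 1), at least one of the following holds: (1) there is a realized sign vector σ with Σ_i p_i σ_i = 0; or (2) there are neighboring realized sign vectors σ and σ' with Σ_i p_i σ_i > 0 and Σ_i p_i σ'_i < 0. -/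
open scoped Classical BigOperators

lemma aux_generic {d : ℕ} {ι : Type} (S : Finset ι) (w : ι → Fin d → ℝ) (b : ι → ℝ)
    (h : ∀ i ∈ S, ∃ x : Fin d → ℝ, (∑ k, w i k * x k) + b i ≠ 0) :
    ∃ x : Fin d → ℝ, ∀ i ∈ S, (∑ k, w i k * x k) + b i ≠ 0 := by
  let P : ι → MvPolynomial (Fin d) ℝ := fun i =>
    (∑ k, MvPolynomial.C (w i k) * MvPolynomial.X k) + MvPolynomial.C (b i)
  have hP : ∀ i x, MvPolynomial.eval x (P i) = (∑ k, w i k * x k) + b i := by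
    intro i x
    simp [P]
  have hne : ∏ i ∈ S, P i ≠ 0 := by
    rw [Finset.prod_ne_zero_iff]
    intro i hi h0
    obtain ⟨x, hx⟩ := h i hi
    rw [← hP, h0] at hx
    simp at hx
  by_contra hcon
  push Not at hcon
  apply hne
  apply MvPolynomial.funext
  intro x
  obtain ⟨i, hi, hx⟩ := hcon x
  rw [map_prod, map_zero]
  exact Finset.prod_eq_zero hi (by rw [hP, hx])

lemma aux_right {n : ℕ} (t : Fin n → ℝ) (a : ℝ) :
    ∃ u, ∀ j, u ≠ t j ∧ (t j < u ↔ t j ≤ a) := by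
  have h : ∀ᶠ u in nhdsWithin a (Set.Ioi a), a < u ∧ ∀ j, a < t j → u < t j := by
    refine Filter.Eventually.and self_mem_nhdsWithin ?_
    rw [Filter.eventually_all]
    intro j
    by_cases hj : a < t j
    · filter_upwards [nhdsWithin_le_nhds (Iio_mem_nhds hj)] with u hu _ using hu
    · simp [hj]
  obtain ⟨u, hu, h2⟩ := h.exists
  refine ⟨u, fun j => ?_⟩
  rcases le_or_gt (t j) a with h | h
  · exact ⟨by intro e; linarith, by constructor <;> intro _ <;> linarith⟩
  · have := h2 j h
    exact ⟨by intro e; linarith, by constructor <;> intro _ <;> linarith⟩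

lemma aux_left {n : ℕ} (t : Fin n → ℝ) (a : ℝ) :
    ∃ u, ∀ j, u ≠ t j ∧ (t j < u ↔ t j < a) := by
  obtain ⟨u, hu⟩ := aux_right (fun j => - t j) (-a)
  refine ⟨-u, fun j => ⟨fun e => (hu j).1 (by linarith), ?_⟩⟩
  obtain ⟨h1, h2⟩ := hu j
  rw [← not_iff_not]
  constructor
  · intro h
    have : -t j < u := lt_of_le_of_ne (by linarith) (Ne.symm h1)
    have := h2.1 this
    linarith
  · intro h
    have := h2.2 (by linarith)
    linarith

lemma aux_walk {n : ℕ} (hn : 0 < n) (t q : Fin n → ℝ) (ht : Function.Injective t) :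
    (∃ u, (∀ j, u ≠ t j) ∧ ∑ j, q j * (if t j < u then 1 else -1) = 0) ∨
    (∃ u u', (∀ j, u ≠ t j) ∧ (∀ j, u' ≠ t j) ∧ (∃! j, ¬ (t j < u ↔ t j < u')) ∧
      0 < ∑ j, q j * (if t j < u then 1 else -1) ∧
      ∑ j, q j * (if t j < u' then 1 else -1) < 0) := by
  haveI : Nonempty (Fin n) := ⟨⟨0, hn⟩⟩
  set c := ∑ j, q j with hc
  let A : Finset (Fin n) := Finset.univ.filter
    (fun i => 0 ≤ c * ∑ j, q j * (if t j ≤ t i then (1:ℝ) else -1))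
  have hA : A.Nonempty := by
    obtain ⟨m, hm⟩ := Finite.exists_max t
    refine ⟨m, ?_⟩
    simp only [A, Finset.mem_filter, Finset.mem_univ, true_and, hm, if_true, mul_one]
    exact mul_self_nonneg c
  obtain ⟨i, hiA, himin⟩ := Finset.exists_min_image A t hA
  have hi : 0 ≤ c * ∑ j, q j * (if t j ≤ t i then (1:ℝ) else -1) := by
    simpa [A] using hiA
  obtain ⟨u, hu⟩ := aux_right t (t i)
  obtain ⟨v, hv⟩ := aux_left t (t i)
  have hFu : ∑ j, q j * (if t j < u then (1:ℝ) else -1)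
      = ∑ j, q j * (if t j ≤ t i then (1:ℝ) else -1) := by
    simp only [(hu _).2]
  have hFv : ∑ j, q j * (if t j < v then (1:ℝ) else -1)
      = ∑ j, q j * (if t j < t i then (1:ℝ) else -1) := by
    simp only [(hv _).2]
  have hvneg : ∑ j, q j * (if t j < t i then (1:ℝ) else -1) = 0 ∨
      c * ∑ j, q j * (if t j < t i then (1:ℝ) else -1) < 0 := by
    by_cases hex : ∃ k, t k < t i
    · right
      let B : Finset (Fin n) := Finset.univ.filter (fun k => t k < t i)
      have hB : B.Nonempty := by
        obtain ⟨k, hk⟩ := hex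
        exact ⟨k, by simpa [B] using hk⟩
      obtain ⟨k, hkB, hkmax⟩ := Finset.exists_max_image B t hB
      have hk : t k < t i := by simpa [B] using hkB
      have hkA : k ∉ A := fun h => absurd (himin k h) (not_le.2 hk)
      have hk2 : c * ∑ j, q j * (if t j ≤ t k then (1:ℝ) else -1) < 0 := by
        simpa [A] using hkA
      have hiff : ∀ j, t j < t i ↔ t j ≤ t k := fun j =>
        ⟨fun h => hkmax j (by simpa [B] using h), fun h => lt_of_le_of_lt h hk⟩
      simpa only [hiff] using hk2
    · push Not at hex
      have e : ∑ j, q j * (if t j < t i then (1:ℝ) else -1) = -c := by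
        simp [not_lt.2 (hex _), hc]
      rw [e]
      by_cases c0 : c = 0
      · left; simp [c0]
      · right
        have := mul_self_pos.2 c0
        linarith
  rw [← hFv] at hvneg
  rw [← hFu] at hi
  have huniq : ∃! j, ¬ (t j < u ↔ t j < v) := by
    refine ⟨i, ?_, ?_⟩
    · simp [(hu _).2, (hv _).2]
    · intro j hj
      simp only [(hu _).2, (hv _).2] at hj
      apply ht
      by_contra hne
      exact hj ⟨fun h => lt_of_le_of_ne h hne, le_of_lt⟩
  have huniq' : ∃! j, ¬ (t j < v ↔ t j < u) := by
    simpa only [iff_comm] using huniq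
  rcases hvneg with h0 | hneg
  · exact Or.inl ⟨v, fun j => (hv j).1, h0⟩
  by_cases hu0 : ∑ j, q j * (if t j < u then (1:ℝ) else -1) = 0
  · exact Or.inl ⟨u, fun j => (hu j).1, hu0⟩
  right
  rcases lt_trichotomy c 0 with hc0 | hc0 | hc0
  · refine ⟨v, u, fun j => (hv j).1, fun j => (hu j).1, huniq', ?_, ?_⟩
    · exact pos_of_mul_neg_right hneg hc0.le
    · exact lt_of_le_of_ne (nonpos_of_mul_nonneg_right hi hc0) hu0
  · rw [hc0] at hneg; simp at hneg
  · refine ⟨u, v, fun j => (hu j).1, fun j => (hv j).1, huniq, ?_, ?_⟩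
    · exact lt_of_le_of_ne (nonneg_of_mul_nonneg_right hi hc0) (Ne.symm hu0)
    · exact neg_of_mul_neg_right hneg hc0.le

/-- Ham-sandwich lemma for hyperplane arrangements (Lemma 4): for any probability
vector `p` over the hyperplanes, either some realized cell has zero signed `p`-mass,
or there exist two neighboring realized cells with signed `p`-masses of opposite
strict signs. -/
theorem stmt_13
    {d n : ℕ} (hd : 1 ≤ d)
    (w : Fin n → Fin d → ℝ) (b : Fin n → ℝ)
    (hw : ∀ i, w i ≠ 0)
    (hdist : ∀ i j : Fin n, i ≠ j →
      {x : Fin d → ℝ | (∑ k, w i k * x k) + b i = 0} ≠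
        {x : Fin d → ℝ | (∑ k, w j k * x k) + b j = 0})
    (p : Fin n → ℝ) (hp : ∀ i, 0 ≤ p i) (hpsum : ∑ i, p i = 1) :
    (∃ σ : Fin n → ℝ, (∀ i, σ i = 1 ∨ σ i = -1) ∧
      (∃ x : Fin d → ℝ, ∀ i, 0 < σ i * ((∑ k, w i k * x k) + b i)) ∧
      ∑ i, p i * σ i = 0) ∨
    (∃ σ σ' : Fin n → ℝ,
      (∀ i, σ i = 1 ∨ σ i = -1) ∧ (∀ i, σ' i = 1 ∨ σ' i = -1) ∧
      (∃ x : Fin d → ℝ, ∀ i, 0 < σ i * ((∑ k, w i k * x k) + b i)) ∧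
      (∃ x : Fin d → ℝ, ∀ i, 0 < σ' i * ((∑ k, w i k * x k) + b i)) ∧
      (∃! i : Fin n, σ i ≠ σ' i) ∧
      0 < ∑ i, p i * σ i ∧ ∑ i, p i * σ' i < 0) := by
  have hn : 0 < n := by
    rcases Nat.eq_zero_or_pos n with h | h
    · subst h; simp at hpsum
    · exact h
  obtain ⟨v, hv⟩ := aux_generic Finset.univ w (fun _ => 0) (by
    intro i _
    obtain ⟨k, hk⟩ := Function.ne_iff.1 (hw i)
    refine ⟨Pi.single k 1, ?_⟩
    simpa [Pi.single_apply] using hk)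
  have hv' : ∀ i, ∑ k, w i k * v k ≠ 0 := fun i => by
    simpa using hv i (Finset.mem_univ i)
  set a : Fin n → ℝ := fun i => ∑ k, w i k * v k with ha
  have hlin : ∀ (i j : Fin n) (x : Fin d → ℝ),
      (∑ k, (a j * w i k - a i * w j k) * x k) + (a j * b i - a i * b j)
        = a j * ((∑ k, w i k * x k) + b i) - a i * ((∑ k, w j k * x k) + b j) := by
    intro i j x
    simp only [sub_mul, Finset.sum_sub_distrib, mul_assoc, ← Finset.mul_sum]
    ring
  obtain ⟨x, hx⟩ := aux_generic
    (Finset.univ.filter (fun ij : Fin n × Fin n => ij.1 ≠ ij.2))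
    (fun ij k => a ij.2 * w ij.1 k - a ij.1 * w ij.2 k)
    (fun ij => a ij.2 * b ij.1 - a ij.1 * b ij.2) (by
      rintro ⟨i, j⟩ hij
      have hij' : i ≠ j := by simpa using hij
      by_contra hcon
      push Not at hcon
      apply hdist i j hij'
      ext y
      have h := hcon y
      simp only [hlin] at h
      simp only [Set.mem_ofPred_eq]
      have h1 := hv' i
      have h2 := hv' j
      constructor
      · intro e
        rw [e] at h
        have : a i * ((∑ k, w j k * y k) + b j) = 0 := by linarith
        exact (mul_eq_zero.1 this).resolve_left h1
      · intro e
        rw [e] at h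
        have : a j * ((∑ k, w i k * y k) + b i) = 0 := by linarith
        exact (mul_eq_zero.1 this).resolve_left h2)
  set H : Fin n → ℝ := fun i => (∑ k, w i k * x k) + b i with hH
  let t : Fin n → ℝ := fun i => - H i / a i
  have hta : ∀ i, a i * t i = - H i := fun i => mul_div_cancel₀ _ (hv' i)
  have ht : Function.Injective t := by
    intro i j hij
    by_contra hne
    have h := hx (i, j) (by simpa using hne)
    simp only [hlin] at h
    apply h
    have h1 := hta i
    have h2 := hta j
    rw [hij] at h1
    change a j * H i - a i * H j = 0
    linear_combination a j * h1 - a i * h2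
  have hline : ∀ (u : ℝ) (i : Fin n),
      (∑ k, w i k * (x k + u * v k)) + b i = a i * (u - t i) := by
    intro u i
    have e : ∑ k, w i k * (x k + u * v k) = (∑ k, w i k * x k) + u * a i := by
      rw [ha, Finset.mul_sum, ← Finset.sum_add_distrib]
      exact Finset.sum_congr rfl (fun k _ => by ring)
    rw [e, mul_sub, hta]
    simp only [hH]; ring
  let s : Fin n → ℝ := fun i => if 0 < a i then 1 else -1
  let σ : ℝ → Fin n → ℝ := fun u i => s i * (if t i < u then 1 else -1)
  have hσ : ∀ u i, σ u i = 1 ∨ σ u i = -1 := by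
    intro u i
    simp only [σ, s]
    split_ifs <;> simp
  have hreal : ∀ u, (∀ j, u ≠ t j) →
      ∃ x : Fin d → ℝ, ∀ i, 0 < σ u i * ((∑ k, w i k * x k) + b i) := by
    intro u hu
    refine ⟨fun k => x k + u * v k, fun i => ?_⟩
    rw [hline]
    have h1 : 0 < s i * a i := by
      simp only [s]
      split_ifs with h
      · linarith
      · have := lt_of_le_of_ne (not_lt.1 h) (hv' i)
        linarith
    have h2 : 0 < (if t i < u then (1:ℝ) else -1) * (u - t i) := by
      split_ifs with h
      · linarith
      · have := lt_of_le_of_ne (not_lt.1 h) (hu i)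
        linarith
    have := mul_pos h1 h2
    simp only [σ]
    linarith
  have hsum : ∀ u, ∑ j, p j * σ u j = ∑ j, (p j * s j) * (if t j < u then 1 else -1) :=
    fun u => Finset.sum_congr rfl (fun j _ => by simp only [σ]; ring)
  have hdiff : ∀ u u' j, σ u j ≠ σ u' j ↔ ¬ (t j < u ↔ t j < u') := by
    intro u u' j
    simp only [σ, s]
    by_cases h1 : t j < u <;> by_cases h2 : t j < u' <;> by_cases h3 : 0 < a j <;>
      simp [h1, h2, h3] <;> norm_num
  rcases aux_walk hn t (fun j => p j * s j) ht with ⟨u, hu, h0⟩ | ⟨u, u', hu, hu', hun, h1, h2⟩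
  · exact Or.inl ⟨σ u, hσ u, hreal u hu, by rw [hsum]; exact h0⟩
  · refine Or.inr ⟨σ u, σ u', hσ u, hσ u', hreal u hu, hreal u' hu', ?_, ?_, ?_⟩
    · simpa only [hdiff] using hun
    · rw [hsum]; exact h1
    · rw [hsum]; exact h2
end

section
/- (Single-step contraction for the relaxed-greedy teacher.) In the teacher-update setting, let p be the current teacher posterior on H with p(h*) < 1, and for an example x with h(x) ≠ 0 for all h ∈ H define: q(x) = Σ_{h : sign(h(x)) = +1} p(h); δ(x) = Σ_{h : sign(h(x)) = sign(h*(x))} p(h); Z(x) = δ(x) + (1 − δ(x))·w_o; and the post-update ratio r(x) = (Z(x) − p(h*)) / p(h*) (i.e. the value of η after a single update of p with example x and its true label sign(h*(x))). Let η = (1 − p(h*)) / p(h*). Then: (i) if q(x) = 1/2, then r(x) ≤ ((3 + w_o)/4) · η; and (ii) if x, x' are two examples with q(x) > 1/2 > q(x') whose sign vectors (sign(h(x)))_{h∈H} and (sign(h(x')))_{h∈H} differ for exactly one hypothesis h₀ ∈ H, then (r(x) + r(x'))/2 ≤ ((3 + w_o)/4) · η. -/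
open scoped Classical BigOperators

/-- Single-step contraction for the relaxed-greedy teacher: (i) if the shown example
splits the posterior mass in half, the post-update ratio contracts by `(3+w_o)/4`;
(ii) the same holds on average for two bipolar examples from neighboring cells. -/
theorem stmt_14
    {H X : Type*} [Fintype H]
    (hyp : H → X → ℝ) (hstar : H)
    (p : H → ℝ) (hppos : ∀ h, 0 < p h) (hpsum : ∑ h, p h = 1)
    (hplt : p hstar < 1)
    (w_o : ℝ) (hw0 : 0 ≤ w_o) (hw1 : w_o < 1)
    (q δ Z r : X → ℝ)
    (hq : ∀ x, q x =
      ∑ h ∈ Finset.univ.filter (fun h => Real.sign (hyp h x) = 1), p h)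
    (hδ : ∀ x, δ x =
      ∑ h ∈ Finset.univ.filter
        (fun h => Real.sign (hyp h x) = Real.sign (hyp hstar x)), p h)
    (hZ : ∀ x, Z x = δ x + (1 - δ x) * w_o)
    (hr : ∀ x, r x = (Z x - p hstar) / p hstar)
    (η : ℝ) (hη : η = (1 - p hstar) / p hstar) :
    (∀ x : X, (∀ h, hyp h x ≠ 0) → q x = 1 / 2 →
      r x ≤ (3 + w_o) / 4 * η) ∧
    (∀ x x' : X, (∀ h, hyp h x ≠ 0) → (∀ h, hyp h x' ≠ 0) →
      1 / 2 < q x → q x' < 1 / 2 →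
      (∃! h0 : H, Real.sign (hyp h0 x) ≠ Real.sign (hyp h0 x')) →
      (r x + r x') / 2 ≤ (3 + w_o) / 4 * η) := by
  have hP := hppos hstar
  have sg : ∀ x, (∀ h, hyp h x ≠ 0) → ∀ h, Real.sign (hyp h x) = 1 ∨ Real.sign (hyp h x) = -1 := by
    intro x hx h
    exact (Real.sign_apply_eq_of_ne_zero _ (hx h)).symm
  have key1 : ∀ x, Real.sign (hyp hstar x) = 1 → δ x = q x := by
    intro x h
    rw [hδ, hq, h]
  have key2 : ∀ x, (∀ h, hyp h x ≠ 0) → Real.sign (hyp hstar x) = -1 → δ x = 1 - q x := by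
    intro x hx h
    rw [hδ, hq, h, eq_sub_iff_add_eq, ← hpsum, Finset.sum_filter, Finset.sum_filter,
      ← Finset.sum_add_distrib]
    refine Finset.sum_congr rfl fun a _ => ?_
    rcases sg x hx a with e | e <;> rw [e, hpsum] <;> norm_num
  have fin : ∀ D : ℝ, (1 - p hstar) / 4 ≤ 1 - D →
      (D + (1 - D) * w_o - p hstar) / p hstar ≤ (3 + w_o) / 4 * η := by
    intro D hD
    rw [hη, ← mul_div_assoc]
    apply div_le_div_of_nonneg_right _ hP.le
    nlinarith [mul_le_mul_of_nonneg_right hD (sub_nonneg.2 hw1.le)]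
  refine ⟨?_, ?_⟩
  · intro x hx hqx
    rw [hr, hZ]
    apply fin
    rcases sg x hx hstar with e | e
    · rw [key1 x e]; linarith
    · rw [key2 x hx e]; linarith
  · intro x x' hx hx' hqx hqx' hex
    obtain ⟨h0, hne, huniq⟩ := hex
    have hδ1 : ∀ x, δ x ≤ 1 := by
      intro x
      rw [hδ, ← hpsum]
      exact Finset.sum_le_sum_of_subset_of_nonneg (Finset.filter_subset _ _)
        fun i _ _ => (hppos i).le
    have hb := hδ1 x
    have hb' := hδ1 x'
    have e : (r x + r x') / 2 = ((δ x + δ x') / 2 + (1 - (δ x + δ x') / 2) * w_o - p hstar) / p hstar := by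
      rw [hr, hr, hZ, hZ]; ring
    rw [e]
    apply fin
    by_cases hs : Real.sign (hyp hstar x) = Real.sign (hyp hstar x')
    · rcases sg x hx hstar with e | e
      · have := key1 x' (hs ▸ e)
        linarith
      · have := key2 x hx e
        linarith
    · have hsum : δ x + δ x' = 1 + p hstar := by
        have hp1 : p hstar = ∑ h, if h = hstar then p h else 0 := by simp
        rw [hδ, hδ, hp1, ← hpsum, Finset.sum_filter, Finset.sum_filter,
          ← Finset.sum_add_distrib, ← Finset.sum_add_distrib]
        refine Finset.sum_congr rfl fun a _ => ?_
        by_cases ha : a = hstar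
        · subst ha; simp
        · have hsame : Real.sign (hyp a x) = Real.sign (hyp a x') := by
            by_contra hc
            exact ha ((huniq a hc).trans (huniq hstar hs).symm)
          rw [if_neg ha, ← hsame]
          rcases sg x hx a with e1 | e1 <;> rcases sg x hx hstar with e2 | e2 <;>
            rcases sg x' hx' hstar with e3 | e3 <;> rw [e2, e3] at hs <;>
            first | exact absurd rfl hs | (rw [e1, e2, e3]; norm_num)
      linarith
end

section
/- (Existence of a short teaching sequence; consequence of Theorem 3 via the probabilistic method.) Let H be a finite class of affine separators h(x) = w_hᵀx + b_h on ℝ^d (non-constant, with pairwise distinct zero hyperplanes) containing a target h*, let P0 be a prior on H with 0 < P0(h*) < 1, fix w_o with 0 ≤ w_o < 1 and ε ∈ (0,1), and let m be an integer with m ≥ (4/(1 − w_o)) · ln( 2·(1−ε)·(1 − P0(h*)) / (ε · P0(h*)) ). If the teaching set X ⊆ ℝ^d is m-rich and no hypothesis vanishes on any example of X, then there exists a sequence x_1, …, x_m of examples from X such that after m teacher updates the posterior satisfies 1 − p_m(h*) ≤ ε. -/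
open scoped Classical BigOperators

theorem aux_avoid {V : Type*} [AddCommGroup V] [Module ℝ V] {ι : Type*}
    (g : ι → V → ℝ) (hg : ∀ i y c x z, g i (y + c • (x - z)) = g i y + c * (g i x - g i z))
    (j : ι) (z0 : V) (hz0 : g j z0 = 0) (S : Finset ι)
    (h : ∀ i ∈ S, ∃ z, g j z = 0 ∧ g i z ≠ 0) :
    ∃ z, g j z = 0 ∧ ∀ i ∈ S, g i z ≠ 0 := by
  classical
  induction S using Finset.induction_on with
  | empty => exact ⟨z0, hz0, by simp⟩
  | insert k S hk ih =>
    obtain ⟨z, hz, hzS⟩ := ih (fun i hi => h i (Finset.mem_insert_of_mem hi))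
    obtain ⟨y, hy, hyk⟩ := h k (Finset.mem_insert_self _ _)
    obtain ⟨t, ht⟩ := Infinite.exists_notMem_finset
      ((insert k S).image (fun i => - g i z / (g i y - g i z)))
    refine ⟨z + t • (y - z), by rw [hg, hz, hy]; ring, ?_⟩
    intro i hi h0
    rw [hg] at h0
    by_cases hd : g i y - g i z = 0
    · rw [hd] at h0
      rcases Finset.mem_insert.1 hi with rfl | hi'
      · apply hyk; linarith
      · apply hzS i hi'; linarith
    · apply ht
      rw [Finset.mem_image]
      refine ⟨i, hi, ?_⟩
      rw [div_eq_iff hd]; linarith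

theorem aux_sign (x e : ℝ) (h : |e| < |x|) : Real.sign (x + e) = Real.sign x := by
  rcases lt_trichotomy x 0 with hx | hx | hx
  · rw [abs_of_neg hx] at h
    have := le_abs_self e
    rw [Real.sign_of_neg hx, Real.sign_of_neg (by linarith)]
  · subst hx; simp at h; exact absurd h (not_lt.2 (abs_nonneg e))
  · rw [abs_of_pos hx] at h
    have := neg_abs_le e
    rw [Real.sign_of_pos hx, Real.sign_of_pos (by linarith)]

theorem aux_cross {V : Type*} [AddCommGroup V] [Module ℝ V] {ι : Type*} [Fintype ι]
    (g : ι → V → ℝ) (hg : ∀ i y c x z, g i (y + c • (x - z)) = g i y + c * (g i x - g i z))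
    (j : ι) (z u : V) (hz : g j z = 0) (hu : g j u ≠ 0) (h : ∀ i, i ≠ j → g i z ≠ 0) :
    ∃ a b : V, (∀ i, g i a ≠ 0) ∧ (∀ i, g i b ≠ 0) ∧
      (∀ i, i ≠ j → Real.sign (g i a) = Real.sign (g i b)) ∧
      Real.sign (g j b) = - Real.sign (g j a) := by
  have hev : ∀ᶠ t : ℝ in nhds 0, ∀ i, i ≠ j → |t * (g i u - g i z)| < |g i z| := by
    rw [Filter.eventually_all]
    intro i
    by_cases hi : i = j
    · simp [hi]
    · have hc : Continuous fun t : ℝ => |t * (g i u - g i z)| := by fun_prop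
      have := hc.continuousAt.eventually_lt (x₀ := (0:ℝ)) (g := fun _ => |g i z|)
        continuousAt_const (by simpa using h i hi)
      filter_upwards [this] with t ht _ using ht
  obtain ⟨t, ht, htpos⟩ := ((hev.filter_mono nhdsWithin_le_nhds).and
    (self_mem_nhdsWithin : Set.Ioi (0:ℝ) ∈ nhdsWithin 0 (Set.Ioi 0))).exists
  have htpos : (0:ℝ) < t := htpos
  have ha : ∀ i, i ≠ j → Real.sign (g i (z + t • (u - z))) = Real.sign (g i z) := by
    intro i hi
    rw [hg]; exact aux_sign _ _ (ht i hi)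
  have hb : ∀ i, i ≠ j → Real.sign (g i (z + (-t) • (u - z))) = Real.sign (g i z) := by
    intro i hi
    rw [hg]; apply aux_sign; rw [neg_mul, abs_neg]; exact ht i hi
  refine ⟨z + t • (u - z), z + (-t) • (u - z), ?_, ?_, fun i hi => (ha i hi).trans (hb i hi).symm, ?_⟩
  · intro i h0
    by_cases hi : i = j
    · subst hi; rw [hg, hz] at h0; simp [htpos.ne', hu] at h0
    · have := ha i hi
      rw [h0, Real.sign_zero, eq_comm, Real.sign_eq_zero_iff] at this
      exact h i hi this
  · intro i h0
    by_cases hi : i = j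
    · subst hi; rw [hg, hz] at h0; simp [htpos.ne', hu] at h0
    · have := hb i hi
      rw [h0, Real.sign_zero, eq_comm, Real.sign_eq_zero_iff] at this
      exact h i hi this
  · rw [hg, hg, hz, ← Real.sign_neg]; congr 1; ring

theorem aux_greedy {V : Type*} {ι : Type*} (S : Finset ι) (F : V → ι → ℝ)
    (hF : ∀ x i, 0 ≤ F x i) (r : ℝ) (hr : 0 ≤ r) (a b : V)
    (hab : ∀ i ∈ S, F a i + F b i = 2 * r)
    (P : ι → ℝ) (n : ℕ) :
    ∃ xs : ℕ → V, (∀ t, xs t = a ∨ xs t = b) ∧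
      ∑ i ∈ S, P i * ∏ s ∈ Finset.range n, F (xs s) i ≤ r ^ n * ∑ i ∈ S, P i := by
  induction n with
  | zero => exact ⟨fun _ => a, by simp, by simp⟩
  | succ n ih =>
    obtain ⟨xs, hxs, hle⟩ := ih
    have key : ∃ x, (x = a ∨ x = b) ∧
        ∑ i ∈ S, (P i * ∏ s ∈ Finset.range n, F (xs s) i) * F x i ≤
          r * ∑ i ∈ S, (P i * ∏ s ∈ Finset.range n, F (xs s) i) := by
      by_contra! hcon
      have h1 := hcon a (Or.inl rfl)
      have h2 := hcon b (Or.inr rfl)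
      have h3 : ∑ i ∈ S, (P i * ∏ s ∈ Finset.range n, F (xs s) i) * F a i +
          ∑ i ∈ S, (P i * ∏ s ∈ Finset.range n, F (xs s) i) * F b i =
          2 * (r * ∑ i ∈ S, (P i * ∏ s ∈ Finset.range n, F (xs s) i)) := by
        rw [← Finset.sum_add_distrib, Finset.mul_sum, Finset.mul_sum]
        refine Finset.sum_congr rfl fun i hi => ?_
        rw [← mul_add, hab i hi]; ring
      linarith
    obtain ⟨x, hx, hxle⟩ := key
    refine ⟨fun s => if s < n then xs s else x, ?_, ?_⟩
    · intro t
      dsimp only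
      split_ifs
      · exact hxs t
      · exact hx
    · calc _ = ∑ i ∈ S, (P i * ∏ s ∈ Finset.range n, F (xs s) i) * F x i := by
            refine Finset.sum_congr rfl fun i _ => ?_
            rw [Finset.prod_range_succ, ← mul_assoc]
            congr 2
            · refine Finset.prod_congr rfl fun s hs => ?_
              simp only [if_pos (Finset.mem_range.1 hs)]
            · simp
        _ ≤ _ := hxle
        _ ≤ r * (r ^ n * ∑ i ∈ S, P i) := mul_le_mul_of_nonneg_left hle hr
        _ = _ := by ring

theorem aux_post {ι : Type*} [Fintype ι] (G : ℕ → ι → ℝ) (hG : ∀ t i, 0 ≤ G t i)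
    (j : ι) (m : ℕ) (hGj : ∀ t < m, G t j = 1) (P : ι → ℝ) (hP : ∀ i, 0 < P i) (hs : ∑ i, P i = 1)
    (p : ℕ → ι → ℝ) (h0 : ∀ i, p 0 i = P i)
    (hp : ∀ t < m, ∀ i, p (t+1) i = p t i * G t i / ∑ i', p t i' * G t i') :
    ∀ t ≤ m, ∀ i, p t i = (P i * ∏ s ∈ Finset.range t, G s i) /
      ∑ i', P i' * ∏ s ∈ Finset.range t, G s i' := by
  intro t
  induction t with
  | zero => intro _ i; simp [h0, hs]
  | succ t ih =>
    intro ht i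
    have ih := ih (by omega)
    have hZ : 0 < ∑ i', P i' * ∏ s ∈ Finset.range t, G s i' := by
      refine Finset.sum_pos' (fun i _ => mul_nonneg (hP i).le
        (Finset.prod_nonneg fun s _ => hG s i)) ⟨j, Finset.mem_univ _, ?_⟩
      rw [Finset.prod_eq_one fun s hs => hGj s (by have := Finset.mem_range.1 hs; omega)]
      simpa using hP j
    rw [hp t (by omega) i]
    simp_rw [ih, Finset.prod_range_succ]
    set Z := ∑ i', P i' * ∏ s ∈ Finset.range t, G s i' with hZd
    have : ∑ i', P i' * (∏ s ∈ Finset.range t, G s i') / Z * G t i' =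
        (∑ i', P i' * ((∏ s ∈ Finset.range t, G s i') * G t i')) / Z := by
      rw [Finset.sum_div]
      refine Finset.sum_congr rfl fun i _ => ?_
      ring
    rw [this, div_mul_eq_mul_div, mul_assoc, div_div_div_cancel_right₀ hZ.ne']

/-- Existence of a short teaching sequence for affine separators: if the teaching
set is `m`-rich with `m ≥ (4/(1-w_o))·ln(2(1-ε)(1-P0(h*))/(ε·P0(h*)))`, then there
is a sequence of `m` examples after which the teacher posterior puts mass at least
`1 - ε` on the target. -/
theorem stmt_15
    {ι : Type*} [Fintype ι] {d : ℕ} (hd : 1 ≤ d)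
    (w : ι → Fin d → ℝ) (b : ι → ℝ) (hw : ∀ i, w i ≠ 0)
    (hdist : ∀ i j : ι, i ≠ j →
      {x : Fin d → ℝ | (∑ k, w i k * x k) + b i = 0} ≠
        {x : Fin d → ℝ | (∑ k, w j k * x k) + b j = 0})
    (hyp : ι → (Fin d → ℝ) → ℝ)
    (hhyp : ∀ i x, hyp i x = (∑ k, w i k * x k) + b i)
    (istar : ι)
    (P0 : ι → ℝ) (hP0pos : ∀ i, 0 < P0 i) (hP0sum : ∑ i, P0 i = 1)
    (hPlt : P0 istar < 1)
    (w_o : ℝ) (hw0 : 0 ≤ w_o) (hw1 : w_o < 1)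
    (ε : ℝ) (hε0 : 0 < ε) (hε1 : ε < 1)
    (m : ℕ)
    (hm : (m : ℝ) ≥ 4 / (1 - w_o) *
      Real.log (2 * (1 - ε) * (1 - P0 istar) / (ε * P0 istar)))
    (X : Finset (Fin d → ℝ))
    (hXnz : ∀ x ∈ X, ∀ i, hyp i x ≠ 0)
    (hrich : ∀ x0 : Fin d → ℝ, (∀ i, hyp i x0 ≠ 0) →
      m ≤ (X.filter
        (fun x => ∀ i, Real.sign (hyp i x) = Real.sign (hyp i x0))).card) :
    ∃ xs : ℕ → (Fin d → ℝ), (∀ t < m, xs t ∈ X) ∧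
      ∀ p : ℕ → ι → ℝ, (∀ i, p 0 i = P0 i) →
        (∀ t < m, ∀ i, p (t + 1) i =
          p t i * w_o ^
            ((1 - Real.sign (hyp i (xs t)) * Real.sign (hyp istar (xs t))) / 2)
          / ∑ i', p t i' * w_o ^
            ((1 - Real.sign (hyp i' (xs t)) * Real.sign (hyp istar (xs t))) / 2)) →
        1 - p m istar ≤ ε := by
  have hg : ∀ i y c x z, hyp i (y + c • (x - z)) = hyp i y + c * (hyp i x - hyp i z) := by
    intro i y c x z
    simp only [hhyp, Pi.add_apply, Pi.smul_apply, Pi.sub_apply, smul_eq_mul]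
    have : ∑ k, w i k * (y k + c * (x k - z k)) =
        ∑ k, w i k * y k + c * (∑ k, w i k * x k - ∑ k, w i k * z k) := by
      rw [← Finset.sum_sub_distrib, Finset.mul_sum, ← Finset.sum_add_distrib]
      exact Finset.sum_congr rfl fun k _ => by ring
    rw [this]; ring
  have hww : ∀ i, hyp i (w i) - hyp i 0 ≠ 0 := by
    intro i h
    simp only [hhyp, Pi.zero_apply, mul_zero, Finset.sum_const_zero, zero_add,
      add_sub_cancel_right] at h
    rw [Finset.sum_eq_zero_iff_of_nonneg (fun k _ => mul_self_nonneg _)] at h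
    exact hw i (funext fun k => mul_self_eq_zero.1 (h k (Finset.mem_univ _)))
  have hzero : ∃ z0, hyp istar z0 = 0 := by
    refine ⟨0 + (-(hyp istar 0) / (hyp istar (w istar) - hyp istar 0)) • (w istar - 0), ?_⟩
    rw [hg, div_mul_cancel₀ _ (hww istar)]; ring
  obtain ⟨z0, hz0⟩ := hzero
  have hex : ∀ i ∈ Finset.univ.erase istar, ∃ z, hyp istar z = 0 ∧ hyp i z ≠ 0 := by
    intro i hi
    by_contra! hcon
    apply hdist i istar (Finset.ne_of_mem_erase hi)
    ext x
    simp only [Set.mem_setOf_eq, ← hhyp]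
    refine ⟨fun hx => ?_, hcon x⟩
    by_contra hne
    have hall : ∀ y, hyp i y = 0 := by
      intro y
      have h1 := hcon (y + (-(hyp istar y / hyp istar x)) • (x - z0)) (by
        rw [hg, hz0]; field_simp; ring)
      rw [hg, hx, hcon z0 hz0] at h1
      simpa using h1
    apply hww i
    rw [hall, hall]; simp
  obtain ⟨z, hz, hzne⟩ := aux_avoid hyp hg istar z0 hz0 _ hex
  have hu : ∃ u, hyp istar u ≠ 0 := by
    by_contra! hcon
    apply hww istar
    rw [hcon, hcon]; simp
  obtain ⟨u, hu⟩ := hu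
  obtain ⟨a0, b0, ha0, hb0, hab0, hs0⟩ := aux_cross hyp hg istar z u hz hu
    (fun i hi => hzne i (Finset.mem_erase.2 ⟨hi, Finset.mem_univ _⟩))
  have hpick : ∃ a b, (1 ≤ m → a ∈ X ∧ b ∈ X) ∧
      (∀ i, Real.sign (hyp i a) = Real.sign (hyp i a0)) ∧
      (∀ i, Real.sign (hyp i b) = Real.sign (hyp i b0)) := by
    by_cases hm1 : 1 ≤ m
    · obtain ⟨a, ha⟩ := Finset.card_pos.1 (lt_of_lt_of_le hm1 (hrich a0 ha0))
      obtain ⟨b, hb⟩ := Finset.card_pos.1 (lt_of_lt_of_le hm1 (hrich b0 hb0))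
      rw [Finset.mem_filter] at ha hb
      exact ⟨a, b, fun _ => ⟨ha.1, hb.1⟩, ha.2, hb.2⟩
    · exact ⟨a0, b0, fun h => absurd h hm1, fun _ => rfl, fun _ => rfl⟩
  obtain ⟨a, b, habX, hsa, hsb⟩ := hpick
  set F : (Fin d → ℝ) → ι → ℝ := fun x i =>
    w_o ^ ((1 - Real.sign (hyp i x) * Real.sign (hyp istar x)) / 2) with hFdef
  have hF : ∀ x i, 0 ≤ F x i := fun x i => Real.rpow_nonneg hw0 _
  have hpm : ∀ i, Real.sign (hyp i a0) = 1 ∨ Real.sign (hyp i a0) = -1 := fun i => by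
    rcases Real.sign_apply_eq_of_ne_zero _ (ha0 i) with h | h <;> simp [h]
  have hFa : ∀ x, x = a ∨ x = b → F x istar = 1 := by
    rintro x (rfl | rfl) <;> simp only [hFdef, hsa, hsb, hs0] <;>
      rcases hpm istar with h | h <;> rw [h] <;> norm_num
  have hFab : ∀ i ∈ Finset.univ.erase istar, F a i + F b i = 2 * ((1 + w_o) / 2) := by
    intro i hi
    have h1 := hab0 i (Finset.ne_of_mem_erase hi)
    simp only [hFdef, hsa, hsb, hs0, ← h1]
    rcases hpm istar with h | h <;> rcases hpm i with h' | h' <;> rw [h, h'] <;> norm_num <;> ring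
  obtain ⟨xs, hxs, hle⟩ := aux_greedy (Finset.univ.erase istar) F hF ((1 + w_o) / 2)
    (by linarith) a b hFab P0 m
  refine ⟨xs, ?_, ?_⟩
  · intro t ht
    rcases hxs t with h | h <;> rw [h]
    · exact (habX (by omega)).1
    · exact (habX (by omega)).2
  intro p hp0 hp
  have hpost := aux_post (fun t i => F (xs t) i) (fun t i => hF _ _) istar m
    (fun t _ => hFa _ (hxs t)) P0 hP0pos hP0sum p hp0 hp m le_rfl istar
  rw [hpost, ← Finset.add_sum_erase _ _ (Finset.mem_univ istar)]
  rw [Finset.prod_eq_one fun s _ => hFa _ (hxs s), mul_one]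
  have hsum : ∑ i ∈ Finset.univ.erase istar, P0 i = 1 - P0 istar := by
    rw [← hP0sum, ← Finset.add_sum_erase _ _ (Finset.mem_univ istar)]; ring
  rw [hsum] at hle
  have hW0 : 0 ≤ ∑ i ∈ Finset.univ.erase istar, P0 i * ∏ s ∈ Finset.range m, F (xs s) i :=
    Finset.sum_nonneg fun i _ => mul_nonneg (hP0pos i).le
      (Finset.prod_nonneg fun s _ => hF _ _)
  set W := ∑ i ∈ Finset.univ.erase istar, P0 i * ∏ s ∈ Finset.range m, F (xs s) i with hWd
  have hPp := hP0pos istar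
  set P := P0 istar with hPd
  set A := 2 * (1 - ε) * (1 - P) / (ε * P) with hA
  have h1P : 0 < 1 - P := by linarith
  have h1e : 0 < 1 - ε := by linarith
  have hApos : 0 < A := by positivity
  have hmL : Real.log A ≤ m * ((1 - w_o) / 2) := by
    have h1w : 0 < 1 - w_o := by linarith
    have h2 : 4 * Real.log A ≤ m * (1 - w_o) := by
      have h3 := mul_le_mul_of_nonneg_right hm h1w.le
      have h4 : 4 / (1 - w_o) * Real.log A * (1 - w_o) = 4 * Real.log A := by
        field_simp
      linarith
    have : 0 ≤ (m:ℝ) * (1 - w_o) := by positivity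
    linarith
  have hr : ((1 + w_o) / 2) ^ m ≤ A⁻¹ := by
    calc ((1 + w_o) / 2) ^ m ≤ (Real.exp (-((1 - w_o) / 2))) ^ m := by
          apply pow_le_pow_left₀ (by linarith)
          have := Real.add_one_le_exp (-((1 - w_o) / 2))
          linarith
      _ = Real.exp (-(m * ((1 - w_o) / 2))) := by
          rw [← Real.exp_nat_mul]; congr 1; ring
      _ ≤ Real.exp (-Real.log A) := Real.exp_le_exp.2 (by linarith)
      _ = A⁻¹ := by rw [Real.exp_neg, Real.exp_log hApos]
  have hW : W * (1 - ε) ≤ ε * P / 2 := by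
    have h5 : W ≤ A⁻¹ * (1 - P) := hle.trans (mul_le_mul_of_nonneg_right hr h1P.le)
    have h6 : A⁻¹ * (1 - P) * (1 - ε) = ε * P / 2 := by
      rw [hA]; field_simp
    calc _ ≤ _ := mul_le_mul_of_nonneg_right h5 h1e.le
      _ = _ := h6
  have hPW : 0 < P + W := by linarith
  rw [sub_le_comm, le_div_iff₀ hPW]
  have : 0 < ε * P := by positivity
  nlinarith
end

section
/- (Correctness of the set-cover reduction in Proposition 1.) Let W be a finite nonempty set and S_1, …, S_n finite sets with ⋃_{j=1}^n S_j = W. Construct a teaching instance as follows: the hypothesis class is H = W ∪ {h*} (with h* ∉ W) with the uniform prior P0(h) = 1/(|W|+1); the example set is X = {x_1, …, x_n}; the target labels all examples negative, i.e. sign(h*(x_j)) = −1 and y(x_j) = −1 for all j; and each w ∈ W labels example x_j as sign(w(x_j)) = +1 if w ∈ S_j and −1 otherwise. The learner is noise-free (α = ∞): for A ⊆ {1,…,n}, the posterior is P_∞(h|A) = P0(h)·𝟙[sign(h(x_j)) = y(x_j) for all j ∈ A] / Σ_{h'∈H} P0(h')·𝟙[sign(h'(x_j)) = y(x_j) for all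 j ∈ A], and the expected error is E[err_L|A] = Σ_{h∈H} P_∞(h|A)·err(h,h*) with err(h,h*) = |{j : sign(h(x_j)) ≠ sign(h*(x_j))}|/n. Then E[err_L|A] < 1/((|W|+1)·n) if and only if ⋃_{j∈A} S_j = W. -/
open scoped Classical BigOperators

/-- Correctness of the set-cover reduction (Proposition 1): in the constructed
noise-free teaching instance, the expected learner error after showing the examples
indexed by `A` is below `1/((|W|+1)·n)` if and only if the sets indexed by `A`
cover `W`. -/
theorem stmt_17
    {W : Type*} [Fintype W] [Nonempty W] {n : ℕ} (hn : 0 < n)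
    (S : Fin n → Finset W)
    (hcover : ∀ v : W, ∃ j : Fin n, v ∈ S j)
    (sgn : Option W → Fin n → ℝ)
    (hsgn_star : ∀ j, sgn none j = -1)
    (hsgn_w : ∀ (v : W) (j : Fin n), sgn (some v) j = if v ∈ S j then 1 else -1)
    (P0 : Option W → ℝ) (hP0 : ∀ h, P0 h = 1 / (Fintype.card W + 1))
    (Pinf : Option W → Finset (Fin n) → ℝ)
    (hPinf : ∀ h A, Pinf h A =
      P0 h * (if ∀ j ∈ A, sgn h j = -1 then (1 : ℝ) else 0)
        / ∑ h', P0 h' * (if ∀ j ∈ A, sgn h' j = -1 then (1 : ℝ) else 0))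
    (err : Option W → ℝ)
    (herr : ∀ h, err h =
      ((Finset.univ.filter (fun j : Fin n => sgn h j ≠ sgn none j)).card : ℝ) / n)
    (Err : Finset (Fin n) → ℝ)
    (hErr : ∀ A, Err A = ∑ h, Pinf h A * err h) :
    ∀ A : Finset (Fin n),
      Err A < 1 / ((Fintype.card W + 1) * n) ↔ ∀ v : W, ∃ j ∈ A, v ∈ S j := by
  intro A
  have hN : (0 : ℝ) < (Fintype.card W : ℝ) + 1 := by positivity
  have hnR : (0 : ℝ) < n := by exact_mod_cast hn
  have hcons : ∀ v : W, (∀ j ∈ A, sgn (some v) j = -1) ↔ ∀ j ∈ A, v ∉ S j := by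
    intro v
    refine forall₂_congr fun j _ => ?_
    rw [hsgn_w]
    by_cases h : v ∈ S j
    · simp only [h, if_true, not_true_eq_false, iff_false]; norm_num
    · simp [h]
  have herr0 : err none = 0 := by rw [herr]; simp
  have herrnn : ∀ h, 0 ≤ err h := by intro h; rw [herr]; positivity
  have herrw : ∀ v : W, 1 / (n : ℝ) ≤ err (some v) := by
    intro v
    rw [herr]
    obtain ⟨j, hj⟩ := hcover v
    have : 0 < (Finset.univ.filter (fun j : Fin n => sgn (some v) j ≠ sgn none j)).card := by
      apply Finset.card_pos.mpr
      refine ⟨j, ?_⟩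
      rw [Finset.mem_filter]
      refine ⟨Finset.mem_univ _, ?_⟩
      rw [hsgn_w, hsgn_star, if_pos hj]; norm_num
    have h1 : (1 : ℝ) ≤
        ((Finset.univ.filter (fun j : Fin n => sgn (some v) j ≠ sgn none j)).card : ℝ) := by
      exact_mod_cast this
    gcongr
  have hP0pos : ∀ h, 0 < P0 h := by intro h; rw [hP0]; positivity
  have hterm : ∀ h, 0 ≤ P0 h * (if ∀ j ∈ A, sgn h j = -1 then (1 : ℝ) else 0) := by
    intro h
    refine mul_nonneg (hP0pos h).le ?_
    split_ifs <;> norm_num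
  have hZ1 : ∑ h', P0 h' * (if ∀ j ∈ A, sgn h' j = -1 then (1 : ℝ) else 0) ≤ 1 := by
    calc _ ≤ ∑ h' : Option W, 1 / ((Fintype.card W : ℝ) + 1) := by
          refine Finset.sum_le_sum fun h _ => ?_
          rw [← hP0 h]
          have := (hP0pos h).le
          split_ifs <;> simp [this]
      _ = 1 := by
          simp only [Finset.sum_const, Finset.card_univ, Fintype.card_option, nsmul_eq_mul]
          push_cast
          field_simp
  have hZ0 : 0 < ∑ h', P0 h' * (if ∀ j ∈ A, sgn h' j = -1 then (1 : ℝ) else 0) := by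
    refine Finset.sum_pos' (fun h _ => hterm h) ⟨none, Finset.mem_univ _, ?_⟩
    rw [if_pos (fun j _ => hsgn_star j), mul_one]
    exact hP0pos none
  rw [hErr]
  constructor
  · intro hlt
    by_contra! hc
    obtain ⟨v, hv⟩ := hc
    refine absurd hlt (not_lt.mpr ?_)
    have hnn : ∀ h, 0 ≤ Pinf h A * err h := by
      intro h
      rw [hPinf]
      exact mul_nonneg (div_nonneg (hterm h) hZ0.le) (herrnn h)
    refine le_trans ?_ (Finset.single_le_sum (fun h _ => hnn h) (Finset.mem_univ (some v)))
    have hP : 1 / ((Fintype.card W : ℝ) + 1) ≤ Pinf (some v) A := by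
      rw [hPinf, if_pos ((hcons v).mpr hv), mul_one, ← hP0 (some v)]
      exact le_div_self (hP0pos _).le hZ0 hZ1
    rw [← one_div_mul_one_div]
    exact mul_le_mul hP (herrw v) (by positivity) (le_trans (by positivity) hP)
  · intro hc
    have : ∑ h, Pinf h A * err h = 0 := by
      refine Finset.sum_eq_zero fun h _ => ?_
      cases h with
      | none => rw [herr0, mul_zero]
      | some v =>
        obtain ⟨j, hj, hv⟩ := hc v
        rw [hPinf, if_neg (fun h => (hcons v).mp h j hj hv)]
        simp
    rw [this]
    positivity
end
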